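/- If the supremum B of branch-counts of ℵ₁-Kurepa trees is attained by some Kurepa tree, then the spectrum of ψ equals [ℵ₀, max(2^{ℵ₀}, B)]; i.e., ψ characterizes the cardinal max(2^{ℵ₀}, B). -/

import Mathlib

open Cardinal

/-- A set-theoretic tree: a transitive well-founded relation in which the
predecessors of any element are linearly ordered. -/
structure STree : Type 1 where
  σ : Type
  lt : σ → σ → Prop
  lt_trans : ∀ a b c, lt a b → lt b c → lt a c
  wf : WellFounded lt
  pred_linear : ∀ c a b, lt a c → lt b c → a = b ∨ lt a b ∨ lt b a

/-- The level (rank) of a node of a tree. -/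
noncomputable def STree.rank (T : STree) (x : T.σ) : Ordinal := (T.wf.apply x).rank

/-- A cofinal branch of height `κ`: a downward-closed chain meeting every level below `κ.ord`. -/
def STree.IsCofBranch (T : STree) (κ : Cardinal) (B : Set T.σ) : Prop :=
  (∀ x ∈ B, ∀ y, T.lt y x → y ∈ B) ∧
  (∀ x ∈ B, ∀ y ∈ B, x = y ∨ T.lt x y ∨ T.lt y x) ∧
  (∀ o : Ordinal, o < κ.ord → ∃ x ∈ B, T.rank x = o)

/-- The number of cofinal branches of height `κ`. -/
noncomputable def STree.branchCard (T : STree) (κ : Cardinal) : Cardinal :=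
  #{B : Set T.σ // T.IsCofBranch κ B}

/-- A `κ`-Kurepa tree: height `κ`, levels of size `< κ`, and at least `κ⁺` cofinal branches. -/
def IsKurepaTree (κ : Cardinal) (T : STree) : Prop :=
  ℵ₀ ≤ κ ∧
  (∀ x : T.σ, T.rank x < κ.ord) ∧
  (∀ o : Ordinal, o < κ.ord → ∃ x : T.σ, T.rank x = o) ∧
  (∀ o : Ordinal, #{x : T.σ // T.rank x = o} < κ) ∧
  Order.succ κ ≤ T.branchCard κ

/-- A model of the sentence `ψ`: a tree whose levels are indexed by an ℵ₁-like linear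
order `L` with a maximum element `⊤`; `V a` is the (countable, for `a ≠ ⊤`) set of nodes
at level `a`, and `V ⊤` is the set of maximal branches. -/
structure PsiModel : Type 1 where
  L : Type
  [linL : LinearOrder L]
  [topL : OrderTop L]
  alephOneLike : ∀ a : L, a ≠ ⊤ → (Set.Iic a).Countable
  V : L → Type
  level_countable : ∀ a : L, a ≠ ⊤ → Countable (V a)
  level_nonempty : ∀ a : L, Nonempty (V a)
  tlt : (Σ a : L, V a) → (Σ a : L, V a) → Prop
  tlt_level : ∀ x y, tlt x y → x.1 < y.1
  tlt_trans : ∀ x y z, tlt x y → tlt y z → tlt x z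
  tlt_total : ∀ x y z, tlt x z → tlt y z → x.1 < y.1 → tlt x y
  tlt_below : ∀ (x : Σ a : L, V a) (b : L), b < x.1 → ∃ y : V b, tlt ⟨b, y⟩ x
  pruned : ∀ x : Σ a : L, V a, x.1 ≠ ⊤ → ∃ y : V ⊤, tlt x ⟨⊤, y⟩
  branch_unique : ∀ x y : V ⊤, (∀ z, tlt z ⟨⊤, x⟩ ↔ tlt z ⟨⊤, y⟩) → x = y

attribute [instance] PsiModel.linL PsiModel.topL

/-- The cardinality of a model of `ψ` (the universe is `P ∪ L ∪ V` with `P` countably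
infinite). -/
noncomputable def PsiModel.card (M : PsiModel) : Cardinal :=
  ℵ₀ + #M.L + #(Σ a : M.L, M.V a)

/-- A substructure embedding between models of `ψ`, incorporating the derived properties:
the level order of the smaller model is an initial segment of that of the larger one,
non-maximal levels agree, and the tree order is preserved. -/
structure PsiEmbed (M N : PsiModel) where
  fL : M.L → N.L
  fL_mono : StrictMono fL
  fL_init : ∀ (a : M.L) (c : N.L), c ≤ fL a → ∃ b : M.L, fL b = c
  fV : ∀ a : M.L, M.V a → N.V (fL a)
  fV_inj : ∀ a : M.L, Function.Injective (fV a)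
  fV_surj : ∀ a : M.L, a ≠ ⊤ → Function.Surjective (fV a)
  tlt_iff : ∀ x y : (Σ a : M.L, M.V a),
    M.tlt x y ↔ N.tlt ⟨fL x.1, fV x.1 x.2⟩ ⟨fL y.1, fV y.1 y.2⟩

/-- The induced map on nodes. -/
def PsiEmbed.map {M N : PsiModel} (e : PsiEmbed M N) (x : Σ a : M.L, M.V a) :
    Σ a : N.L, N.V a := ⟨e.fL x.1, e.fV x.1 x.2⟩

/-- A model of `ψ` is maximal if it has no proper extension: every embedding into another
model of `ψ` is onto. -/
def PsiModel.MaximalModel (M : PsiModel) : Prop :=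
  ∀ (N : PsiModel) (e : PsiEmbed M N),
    Function.Surjective e.fL ∧ ∀ a : M.L, Function.Surjective (e.fV a)

/-!
Kurepa trees and models of `ψ` are both presented by thin families: sets `𝓕` of subsets of some `σ`
stratified by a map `l : σ → L`, such that each level `a` leaves only few truncations
`{x ∈ s | l x ≤ a}` with `s ∈ 𝓕`. The truncations form a tree in which every `s ∈ 𝓕` is a branch.
Conversely, the cofinal branches of a Kurepa tree form a thin family, because a branch up to level
`a` is determined by its node at level `a`, and for the same reason so do the sets of nodes below
the maximal branches of a model of `ψ`. A model of size above `2 ^ ℵ₀` has as many maximal branches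
as elements, and uncountably many levels. Its level order need not be a well-order, but it may be
replaced by `ω₁` along any injection, because a countable set of levels is bounded below `⊤`.
-/

universe u v

theorem rank_eq_rank_of_forall_exists_rel {α β : Type u} {r : α → α → Prop} {s : β → β → Prop}
    {f : α → β} (hmap : ∀ {a a'}, r a' a → s (f a') (f a))
    (hlift : ∀ {a b}, s b (f a) → ∃ a', r a' a ∧ f a' = b) {a : α} (ha : Acc r a)
    (hfa : Acc s (f a)) : ha.rank = hfa.rank := by
  induction ha with | intro a h ih
  rw [Acc.rank_eq, Acc.rank_eq]
  apply le_antisymm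
  · refine Ordinal.iSup_le fun ⟨a', ha'⟩ => ?_
    rw [ih a' ha' (hfa.inv (hmap ha'))]
    exact Ordinal.le_iSup (fun b : {b // s b (f a)} => Order.succ (hfa.inv b.2).rank)
      ⟨f a', hmap ha'⟩
  · refine Ordinal.iSup_le fun ⟨b, hb⟩ => ?_
    obtain ⟨a', ha', rfl⟩ := hlift hb
    rw [← ih a' ha' (hfa.inv hb)]
    exact Ordinal.le_iSup (fun b : {b // r b a} => Order.succ (h b b.2).rank) ⟨a', ha'⟩

theorem mk_le_succ_of_forall_mk_Iic_le {α : Type u} [LinearOrder α] {κ : Cardinal.{u}}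
    (hκ : ℵ₀ ≤ κ) (h : ∀ a : α, #(Set.Iic a) ≤ κ) : #α ≤ Order.succ κ := by
  by_contra! hlt
  obtain ⟨s, hs⟩ := le_mk_iff_exists_set.1 hlt.le
  have hcofinal : ⋃ i ∈ s, Set.Iic i = Set.univ := by
    refine Set.eq_univ_of_forall fun a => ?_
    by_contra! ha
    have hsub : s ⊆ Set.Iic a := fun i hi =>
      (not_le.1 fun hai => ha (Set.mem_biUnion hi hai)).le
    exact ((Order.lt_succ κ).trans_le (hs.ge.trans (mk_le_mk_of_subset hsub))).not_ge (h a)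
  refine hlt.not_ge ?_
  calc #α = #(⋃ i ∈ s, Set.Iic i) := by rw [hcofinal, mk_univ]
    _ ≤ #s * ⨆ i : s, #(Set.Iic i.1) := mk_biUnion_le _ _
    _ ≤ Order.succ κ * Order.succ κ :=
      mul_le_mul' hs.le (ciSup_le' fun i => (h i).trans (Order.le_succ κ))
    _ = Order.succ κ := mul_eq_self (hκ.trans (Order.le_succ κ))

theorem countable_Iic_toType_ord_aleph_one (a : (ℵ₁ : Cardinal).ord.ToType) :
    (Set.Iic a).Countable := by
  rw [← le_aleph0_iff_set_countable, ← lt_aleph_one_iff]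
  exact (mk_Iic_lt a (by simp) (by simp)).trans_eq (mk_ord_toType _)

section Truncate

variable {σ : Type u} {L : Type v}

/-- The part of `s` up to level `a`, where `l x` is the level of the point `x`. For a subset `s` of
an ordinal and `l = id` this is the initial segment `s ∩ (a + 1)`. -/
def truncate [LE L] (l : σ → L) (a : L) (s : Set σ) : Set σ := {x ∈ s | l x ≤ a}

theorem truncate_truncate_of_le [Preorder L] (l : σ → L) {a b : L} (hab : a ≤ b) (s : Set σ) :
    truncate l a (truncate l b s) = truncate l a s :=
  Set.ext fun _ => ⟨fun h => ⟨h.1.1, h.2⟩, fun h => ⟨⟨h.1, h.2.trans hab⟩, h.2⟩⟩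

theorem truncate_top [LE L] [OrderTop L] (l : σ → L) (s : Set σ) : truncate l ⊤ s = s :=
  Set.sep_eq_self_iff_mem_true.2 fun _ _ => le_top

theorem truncate_withTop_coe [LE L] (l : σ → L) (a : L) :
    truncate (fun x => (l x : WithTop L)) a = truncate l a := by
  simp only [funext_iff, truncate, WithTop.coe_le_coe, implies_true]

theorem eq_of_forall_truncate_eq [Preorder L] {l : σ → L} {s t : Set σ}
    (h : ∀ x, truncate l (l x) s = truncate l (l x) t) : s = t :=
  Set.ext fun x => by simpa [truncate] using Set.ext_iff.1 (h x) x

/-- A thin family of sets: each level leaves fewer than `κ` truncations. A Kurepa family on `κ` is a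
thin family of more than `κ` subsets of `κ`, with `l = id`. -/
def IsThin [LE L] (κ : Cardinal.{u}) (l : σ → L) (𝓕 : Set (Set σ)) : Prop :=
  ∀ a, #(truncate l a '' 𝓕) < κ

theorem isThin_aleph_one_iff [LE L] {l : σ → L} {𝓕 : Set (Set σ)} :
    IsThin ℵ₁ l 𝓕 ↔ ∀ a, (truncate l a '' 𝓕).Countable := by
  simp only [IsThin, lt_aleph_one_iff, le_aleph0_iff_set_countable]

theorem IsThin.mono [LE L] {κ : Cardinal.{u}} {l : σ → L} {𝓕 𝓖 : Set (Set σ)} (h : IsThin κ l 𝓖)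
    (hsub : 𝓕 ⊆ 𝓖) : IsThin κ l 𝓕 :=
  fun a => (mk_le_mk_of_subset (Set.image_mono hsub)).trans_lt (h a)

/-- The nodes of the tree of truncations of a family: a level together with a truncation to it. The
level is recorded because sets of different levels may coincide. -/
abbrev TruncNode [LE L] (l : σ → L) (𝓕 : Set (Set σ)) := Σ a : L, truncate l a '' 𝓕

namespace TruncNode

variable {l : σ → L} {𝓕 : Set (Set σ)}

/-- The node at level `a` of the branch of the tree of truncations given by `s ∈ 𝓕`. -/
def ofMem [LE L] (l : σ → L) {s : Set σ} (hs : s ∈ 𝓕) (a : L) : TruncNode l 𝓕 :=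
  ⟨a, truncate l a s, s, hs, rfl⟩

/-- The tree order on truncations: `p` lies strictly below `q` if it is a truncation of `q` to a
smaller level. -/
protected def lt [Preorder L] (p q : TruncNode l 𝓕) : Prop :=
  p.1 < q.1 ∧ (p.2 : Set σ) = truncate l p.1 q.2

section Preorder

variable [Preorder L] {p q r : TruncNode l 𝓕}

protected theorem lt_trans (hpq : p.lt q) (hqr : q.lt r) : p.lt r :=
  ⟨hpq.1.trans hqr.1, by rw [hpq.2, hqr.2, truncate_truncate_of_le l hpq.1.le]⟩

theorem lt_of_eq_truncate (h : p.1 < q.1) {s : Set σ} (hp : (p.2 : Set σ) = truncate l p.1 s)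
    (hq : (q.2 : Set σ) = truncate l q.1 s) : p.lt q :=
  ⟨h, by rw [hp, hq, truncate_truncate_of_le l h.le]⟩

theorem eq_truncate_of_lt (h : p.lt q) {s : Set σ} (hq : (q.2 : Set σ) = truncate l q.1 s) :
    (p.2 : Set σ) = truncate l p.1 s := by
  rw [h.2, hq, truncate_truncate_of_le l h.1.le]

theorem exists_lt (q : TruncNode l 𝓕) {b : L} (h : b < q.1) :
    ∃ t : truncate l b '' 𝓕, TruncNode.lt ⟨b, t⟩ q := by
  obtain ⟨a, _, s, hs, rfl⟩ := q
  exact ⟨(ofMem l hs b).2, lt_of_eq_truncate h rfl rfl⟩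

end Preorder

theorem eq_or_lt_or_lt_of_eq_truncate [LinearOrder L] {p q : TruncNode l 𝓕} {s : Set σ}
    (hp : (p.2 : Set σ) = truncate l p.1 s) (hq : (q.2 : Set σ) = truncate l q.1 s) :
    p = q ∨ p.lt q ∨ q.lt p := by
  rcases lt_trichotomy p.1 q.1 with h | h | h
  · exact .inr (.inl (lt_of_eq_truncate h hp hq))
  · obtain ⟨a, p⟩ := p
    obtain ⟨b, q⟩ := q
    obtain rfl : a = b := h
    exact .inl (congrArg (Sigma.mk a) (Subtype.ext (hp.trans hq.symm)))
  · exact .inr (.inr (lt_of_eq_truncate h hq hp))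

end TruncNode

end Truncate

namespace STree

theorem rank_lt_rank (T : STree) {x y : T.σ} (h : T.lt x y) : T.rank x < T.rank y :=
  Acc.rank_lt_of_rel _ h

theorem IsCofBranch.sep_rank_le {T : STree} {κ : Cardinal} {s : Set T.σ} (hs : T.IsCofBranch κ s)
    {x : T.σ} (hx : x ∈ s) : {y ∈ s | T.rank y ≤ T.rank x} = {y | y = x ∨ T.lt y x} := by
  obtain ⟨hdown, hchain, -⟩ := hs
  ext y
  constructor
  · rintro ⟨hy, hyx⟩
    rcases hchain y hy x hx with h | h | h
    · exact .inl h
    · exact .inr h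
    · exact absurd (T.rank_lt_rank h) hyx.not_gt
  · rintro (rfl | h)
    · exact ⟨hx, le_rfl⟩
    · exact ⟨hdown x hx y h, (T.rank_lt_rank h).le⟩

/-- The tree of truncations of the members of `𝓕`. -/
def ofFamily {σ L : Type} [LinearOrder L] [WellFoundedLT L] (l : σ → L) (𝓕 : Set (Set σ)) :
    STree where
  σ := TruncNode l 𝓕
  lt := TruncNode.lt
  lt_trans _ _ _ := TruncNode.lt_trans
  wf := Subrelation.wf (fun h => h.1) (InvImage.wf Sigma.fst wellFounded_lt)
  pred_linear _ _ _ ha hb := TruncNode.eq_or_lt_or_lt_of_eq_truncate ha.2 hb.2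

section OfFamily

open scoped Ordinal

variable {σ L : Type} [LinearOrder L] [WellFoundedLT L] {l : σ → L} {𝓕 : Set (Set σ)}

theorem rank_ofFamily (p : (ofFamily l 𝓕).σ) :
    (ofFamily l 𝓕).rank p = Ordinal.typein (α := L) (· < ·) p.1 := by
  rw [← IsWellFounded.rank_eq_typein]
  refine rank_eq_rank_of_forall_exists_rel (f := Sigma.fst) (fun h => h.1) (fun h => ?_) _ _
  obtain ⟨t, ht⟩ := TruncNode.exists_lt _ h
  exact ⟨⟨_, t⟩, ht, rfl⟩

theorem isCofBranch_ofFamily {κ : Cardinal} (hL : typeLT L = κ.ord) {s : Set σ} (hs : s ∈ 𝓕) :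
    (ofFamily l 𝓕).IsCofBranch κ {p | (p.2 : Set σ) = truncate l p.1 s} := by
  refine ⟨fun _ hp _ h => TruncNode.eq_truncate_of_lt h hp,
    fun _ hp _ hq => TruncNode.eq_or_lt_or_lt_of_eq_truncate hp hq, fun o ho => ?_⟩
  obtain ⟨a, rfl⟩ := Ordinal.typein_surj (α := L) (· < ·) (ho.trans_eq hL.symm)
  exact ⟨TruncNode.ofMem l hs a, rfl, rank_ofFamily _⟩

theorem mk_le_branchCard_ofFamily {κ : Cardinal} (hL : typeLT L = κ.ord) :
    #𝓕 ≤ (ofFamily l 𝓕).branchCard κ := by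
  let branch (s : 𝓕) : {b // (ofFamily l 𝓕).IsCofBranch κ b} := ⟨_, isCofBranch_ofFamily hL s.2⟩
  refine mk_le_of_injective (f := branch) fun s t h => ?_
  refine Subtype.ext (eq_of_forall_truncate_eq (l := l) fun x => ?_)
  exact (Set.ext_iff.1 (congrArg Subtype.val h) (TruncNode.ofMem l s.2 (l x))).1 rfl

theorem mk_rank_eq_ofFamily_lt {κ : Cardinal} (h𝓕 : IsThin κ l 𝓕) (hκ : κ ≠ 0) (o : Ordinal) :
    #{p : (ofFamily l 𝓕).σ // (ofFamily l 𝓕).rank p = o} < κ := by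
  rcases isEmpty_or_nonempty {p // (ofFamily l 𝓕).rank p = o} with h | ⟨⟨⟨a, _⟩, rfl⟩⟩
  · rwa [mk_eq_zero, pos_iff_ne_zero]
  · refine (mk_le_mk_of_subset (t := Set.range (Sigma.mk a)) ?_).trans_lt
      (mk_range_le.trans_lt (h𝓕 a))
    rintro ⟨b, t⟩ hb
    obtain rfl : b = a := (Ordinal.typein_inj (· < ·)).1
      ((rank_ofFamily _).symm.trans (Eq.trans hb (rank_ofFamily _)))
    exact ⟨t, rfl⟩

theorem isKurepaTree_ofFamily {κ : Cardinal} (hκ : ℵ₀ ≤ κ) (hL : typeLT L = κ.ord)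
    (h𝓕 : IsThin κ l 𝓕) (hcard : κ < #𝓕) : IsKurepaTree κ (ofFamily l 𝓕) := by
  refine ⟨hκ, fun p => ?_, fun o ho => ?_,
    mk_rank_eq_ofFamily_lt h𝓕 (aleph0_pos.trans_le hκ).ne',
    Order.succ_le_of_lt (hcard.trans_le (mk_le_branchCard_ofFamily hL))⟩
  · rw [rank_ofFamily, ← hL]
    exact Ordinal.typein_lt_type _ _
  · obtain ⟨⟨s, hs⟩⟩ : Nonempty 𝓕 := mk_ne_zero_iff.1 (bot_le.trans_lt hcard).ne'
    obtain ⟨p, -, hp⟩ := (isCofBranch_ofFamily (l := l) hL hs).2.2 o ho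
    exact ⟨p, hp⟩

end OfFamily

end STree

namespace IsKurepaTree

variable {κ : Cardinal} {T : STree}

/-- The level of a node as an element of a well-order of type `κ` in the universe of `T`, where
`STree.rank` is an ordinal one universe higher. -/
noncomputable def level (hT : IsKurepaTree κ T) (x : T.σ) : κ.ord.ToType :=
  Ordinal.ToType.mk ⟨T.rank x, hT.2.1 x⟩

theorem toOrd_level (hT : IsKurepaTree κ T) (x : T.σ) : (hT.level x).toOrd.1 = T.rank x :=
  congrArg Subtype.val (Ordinal.ToType.mk.symm_apply_apply _)

theorem level_le_mk_iff (hT : IsKurepaTree κ T) {x : T.σ} {o : Set.Iio κ.ord} :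
    hT.level x ≤ Ordinal.ToType.mk o ↔ T.rank x ≤ o :=
  Ordinal.ToType.mk.le_iff_le

theorem mk_level_fiber_lt (hT : IsKurepaTree κ T) (a : κ.ord.ToType) : #(hT.level ⁻¹' {a}) < κ := by
  refine (mk_le_mk_of_subset (t := {x | T.rank x = a.toOrd}) ?_).trans_lt (hT.2.2.2.1 a.toOrd)
  rintro x rfl
  exact (hT.toOrd_level x).symm

theorem isThin (hT : IsKurepaTree κ T) : IsThin κ hT.level {s | T.IsCofBranch κ s} := by
  intro a
  obtain ⟨⟨o, ho⟩, rfl⟩ := Ordinal.ToType.mk.surjective a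
  refine (mk_le_mk_of_subset ?_).trans_lt
    ((mk_image_le (f := fun x => {y | y = x ∨ T.lt y x})).trans_lt (hT.2.2.2.1 o))
  rintro _ ⟨s, hs, rfl⟩
  obtain ⟨x, hx, rfl⟩ := hs.2.2 o ho
  refine ⟨x, rfl, ?_⟩
  simp only [truncate, level_le_mk_iff, hs.sep_rank_le hx]

theorem mk_le (hT : IsKurepaTree κ T) : #T.σ ≤ κ :=
  calc #T.σ ≤ #κ.ord.ToType * κ :=
        mk_le_mk_mul_of_mk_preimage_le hT.level fun a => (hT.mk_level_fiber_lt a).le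
    _ = κ := by rw [mk_ord_toType, mul_eq_self hT.1]

theorem branchCard_le (hT : IsKurepaTree κ T) : T.branchCard κ ≤ 2 ^ κ :=
  calc T.branchCard κ ≤ #(Set T.σ) := mk_subtype_le _
    _ = 2 ^ #T.σ := mk_set
    _ ≤ 2 ^ κ := power_le_power_left two_ne_zero hT.mk_le

theorem branchCard_le_sSup (hT : IsKurepaTree κ T) :
    T.branchCard κ ≤ sSup {lam | ∃ T : STree, IsKurepaTree κ T ∧ T.branchCard κ = lam} := by
  refine le_csSup ⟨2 ^ κ, ?_⟩ ⟨T, hT, rfl⟩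
  rintro _ ⟨T', hT', rfl⟩
  exact hT'.branchCard_le

end IsKurepaTree

namespace PsiModel

/-- The model of `ψ` whose nodes below `⊤` are the truncations of the members of `𝓕`, and whose
maximal branches are the members of `𝓕` themselves, as truncations to the added level `⊤`. -/
def ofFamily {σ L : Type} [LinearOrder L] (hL : ∀ a : L, (Set.Iic a).Countable) {l : σ → L}
    {𝓕 : Set (Set σ)} (h𝓕 : IsThin ℵ₁ l 𝓕) (hne : 𝓕.Nonempty) : PsiModel where
  L := WithTop L
  alephOneLike a ha := by
    lift a to L using ha
    refine ((hL a).image ((↑) : L → WithTop L)).mono fun b hb => ?_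
    lift b to L using ne_top_of_le_ne_top WithTop.coe_ne_top hb
    exact ⟨b, WithTop.coe_le_coe.1 hb, rfl⟩
  V a := truncate (fun x => (l x : WithTop L)) a '' 𝓕
  level_countable a ha := by
    lift a to L using ha
    rw [truncate_withTop_coe]
    exact isThin_aleph_one_iff.1 h𝓕 a
  level_nonempty _ := (hne.image _).to_subtype
  tlt := TruncNode.lt
  tlt_level _ _ h := h.1
  tlt_trans _ _ _ := TruncNode.lt_trans
  tlt_total _ _ _ hx hy h := TruncNode.lt_of_eq_truncate h hx.2 hy.2
  tlt_below q _ := TruncNode.exists_lt q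
  pruned := by
    rintro ⟨a, _, s, hs, rfl⟩ ha
    exact ⟨(TruncNode.ofMem _ hs ⊤).2, TruncNode.lt_of_eq_truncate ha.lt_top rfl rfl⟩
  branch_unique := by
    rintro ⟨_, s, hs, rfl⟩ ⟨_, t, ht, rfl⟩ h
    refine Subtype.ext (congrArg (truncate (fun x => (l x : WithTop L)) ⊤) ?_)
    refine eq_of_forall_truncate_eq (l := fun x => (l x : WithTop L)) fun x => ?_
    have hlt := (h (TruncNode.ofMem _ hs (l x))).1
      (TruncNode.lt_of_eq_truncate (WithTop.coe_lt_top _) rfl rfl)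
    exact TruncNode.eq_truncate_of_lt hlt rfl

theorem mk_top_ofFamily {σ L : Type} [LinearOrder L] (hL : ∀ a : L, (Set.Iic a).Countable)
    {l : σ → L} {𝓕 : Set (Set σ)} (h𝓕 : IsThin ℵ₁ l 𝓕) (hne : 𝓕.Nonempty) :
    #((ofFamily hL h𝓕 hne).V ⊤) = #𝓕 := by
  change #(truncate (fun x => (l x : WithTop L)) ⊤ '' 𝓕) = #𝓕
  rw [funext (truncate_top _), Set.image_id']

variable (M : PsiModel)

theorem aleph0_le_card : ℵ₀ ≤ M.card :=
  (self_le_add_right ℵ₀ _).trans (self_le_add_right _ _)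

theorem mk_top_le_card : #(M.V ⊤) ≤ M.card :=
  (mk_le_of_injective sigma_mk_injective).trans (self_le_add_left _ _)

theorem mk_L_le : #M.L ≤ ℵ₁ := by
  have hIio : #(Set.Iio (⊤ : M.L)) ≤ ℵ₁ := by
    rw [← succ_aleph0]
    refine mk_le_succ_of_forall_mk_Iic_le le_rfl fun a => ?_
    exact le_aleph0_iff_set_countable.2
      ((M.alephOneLike a.1 a.2.ne).preimage Subtype.val_injective)
  rw [← mk_univ, ← Set.Iic_top, ← Set.Iio_insert]
  exact mk_insert_le.trans
    (add_le_of_le (aleph0_le_aleph 1) hIio (one_le_aleph0.trans (aleph0_le_aleph 1)))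

theorem card_le {m : Cardinal} (hm : ℵ₀ ≤ m) (hL : #M.L ≤ m) (hV : #(M.V ⊤) ≤ m) : M.card ≤ m := by
  have hV' (a : M.L) : #(M.V a) ≤ m := by
    rcases eq_or_ne a ⊤ with rfl | ha
    · exact hV
    · have := M.level_countable a ha
      exact mk_le_aleph0.trans hm
  refine add_le_of_le hm (add_le_of_le hm hm hL) ?_
  calc #(Σ a, M.V a) = sum fun a => #(M.V a) := mk_sigma _
    _ ≤ sum fun _ : M.L => m := sum_le_sum _ _ hV'
    _ = #M.L * m := sum_const' _ _
    _ ≤ m := mul_le_of_le hm hL le_rfl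

theorem exists_card_eq_mk_of_isThin {σ L : Type} [LinearOrder L]
    (hL : ∀ a : L, (Set.Iic a).Countable) {l : σ → L} {𝓕 : Set (Set σ)} (h𝓕 : IsThin ℵ₁ l 𝓕)
    (h₀ : ℵ₀ ≤ #𝓕) (hcard : #L ≤ #𝓕) : ∃ M : PsiModel, M.card = #𝓕 := by
  have hne : 𝓕.Nonempty :=
    Set.nonempty_coe_sort.1 (mk_ne_zero_iff.1 (aleph0_pos.trans_le h₀).ne')
  have htop := mk_top_ofFamily hL h𝓕 hne
  refine ⟨ofFamily hL h𝓕 hne, le_antisymm (card_le _ h₀ ?_ htop.le) ?_⟩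
  · exact mk_option.trans_le (add_le_of_le h₀ hcard (one_le_aleph0.trans h₀))
  · exact htop.ge.trans (mk_top_le_card _)

theorem exists_card_eq_of_le_continuum {κ : Cardinal} (h₀ : ℵ₀ ≤ κ) (h : κ ≤ 2 ^ ℵ₀) :
    ∃ M : PsiModel, M.card = κ := by
  obtain ⟨𝓕, rfl⟩ := le_mk_iff_exists_set.1 (h.trans_eq (by simp : 2 ^ ℵ₀ = #(Set ℕ)))
  refine exists_card_eq_mk_of_isThin (l := id) (fun a => Set.to_countable _)
    (isThin_aleph_one_iff.2 fun a => ?_) h₀ (mk_nat.trans_le h₀)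
  refine (Set.finite_Iic a).finite_subsets.countable.mono ?_
  rintro _ ⟨s, -, rfl⟩ n hn
  exact hn.2

theorem exists_card_eq_of_le_branchCard {T : STree} (hT : IsKurepaTree ℵ₁ T) {κ : Cardinal}
    (h₁ : ℵ₁ ≤ κ) (h : κ ≤ T.branchCard ℵ₁) : ∃ M : PsiModel, M.card = κ := by
  obtain ⟨𝓕, hsub, rfl⟩ := le_mk_iff_exists_subset.1 h
  exact exists_card_eq_mk_of_isThin countable_Iic_toType_ord_aleph_one (hT.isThin.mono hsub)
    ((aleph0_le_aleph 1).trans h₁) ((mk_ord_toType _).trans_le h₁)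

/-- The set of nodes below a maximal branch. -/
def below (x : M.V ⊤) : Set (Σ a, M.V a) := {z | M.tlt z ⟨⊤, x⟩}

theorem below_injective : Function.Injective M.below :=
  fun x y h => M.branch_unique x y (Set.ext_iff.1 h)

variable {M}

theorem ne_top_of_mem_below {x : M.V ⊤} {z : Σ a, M.V a} (hz : z ∈ M.below x) : z.1 ≠ ⊤ :=
  (M.tlt_level _ _ hz).ne

theorem sep_below_lt {x : M.V ⊤} {y : Σ a, M.V a} (hy : y ∈ M.below x) :
    {z ∈ M.below x | z.1 < y.1} = {z | M.tlt z y} :=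
  Set.ext fun z => ⟨fun hz => M.tlt_total z y _ hz.1 hy hz.2,
    fun hz => ⟨M.tlt_trans z y _ hz hy, M.tlt_level z y hz⟩⟩

theorem mk_top_le_of_countable_L (h : Countable M.L) : #(M.V ⊤) ≤ 2 ^ ℵ₀ := by
  let s : Set (Σ a, M.V a) := {z | z.1 ≠ ⊤}
  have hs : s.Countable := by
    have : ∀ a : {a : M.L // a ≠ ⊤}, Countable (M.V a) := fun a => M.level_countable a a.2
    refine (Set.countable_range fun z : Σ a : {a : M.L // a ≠ ⊤}, M.V a =>
      (⟨z.1, z.2⟩ : Σ a, M.V a)).mono ?_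
    rintro ⟨a, v⟩ ha
    exact ⟨⟨⟨a, ha⟩, v⟩, rfl⟩
  calc #(M.V ⊤) = #(Set.range M.below) := (mk_range_eq _ M.below_injective).symm
    _ ≤ #(𝒫 s) := mk_le_mk_of_subset <| by
      rintro _ ⟨x, rfl⟩ z hz
      exact ne_top_of_mem_below hz
    _ = 2 ^ #s := mk_powerset s
    _ ≤ 2 ^ ℵ₀ := power_le_power_left two_ne_zero (le_aleph0_iff_set_countable.2 hs)

theorem exists_ne_top_forall_lt_of_countable (hL : Uncountable M.L) {s : Set M.L}
    (hs : s.Countable) (htop : ⊤ ∉ s) : ∃ c : M.L, c ≠ ⊤ ∧ ∀ b ∈ s, b < c := by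
  by_contra! hno
  refine Set.not_countable_univ (α := M.L) (Set.Countable.mono (fun c _ => ?_)
    ((hs.biUnion fun b hb => M.alephOneLike b (ne_of_mem_of_not_mem hb htop)).insert ⊤))
  refine or_iff_not_imp_left.2 fun hc => ?_
  obtain ⟨b, hb, hcb⟩ := hno c hc
  exact Set.mem_biUnion hb hcb

theorem isThin_range_below (hL : Uncountable M.L) {L' : Type} [LinearOrder L']
    (hL' : ∀ a : L', (Set.Iic a).Countable) {e : M.L → L'} (he : Function.Injective e) :
    IsThin ℵ₁ (fun z : Σ a, M.V a => e z.1) (Set.range M.below) := by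
  refine isThin_aleph_one_iff.2 fun a => ?_
  obtain ⟨c, hc, hlt⟩ : ∃ c : M.L, c ≠ ⊤ ∧ ∀ b, e b ≤ a → b ≠ ⊤ → b < c := by
    obtain ⟨c, hc, h⟩ := exists_ne_top_forall_lt_of_countable hL
      (((hL' a).preimage he).mono Set.sdiff_subset) (Set.notMem_sdiff_of_mem (Set.mem_singleton _))
    exact ⟨c, hc, fun b hb hb' => h b ⟨hb, hb'⟩⟩
  have := M.level_countable c hc
  let upTo (y : M.V c) : Set (Σ a, M.V a) := truncate (fun z => e z.1) a {z | M.tlt z ⟨c, y⟩}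
  refine (Set.countable_range upTo).mono ?_
  rintro _ ⟨_, ⟨x, rfl⟩, rfl⟩
  obtain ⟨y, hy⟩ := M.tlt_below ⟨⊤, x⟩ c hc.lt_top
  refine ⟨y, ?_⟩
  simp only [upTo, ← sep_below_lt hy]
  ext z
  exact ⟨fun h => ⟨h.1.1, h.2⟩, fun h => ⟨⟨h.1, hlt _ h.2 (ne_top_of_mem_below h.1)⟩, h.2⟩⟩

theorem exists_isKurepaTree (h : 2 ^ ℵ₀ < #(M.V ⊤)) :
    ∃ T : STree, IsKurepaTree ℵ₁ T ∧ #(M.V ⊤) ≤ T.branchCard ℵ₁ := by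
  have hL : Uncountable M.L := not_countable_iff.1 fun hc => (mk_top_le_of_countable_L hc).not_gt h
  obtain ⟨e⟩ : Nonempty (M.L ↪ (ℵ₁ : Cardinal).ord.ToType) :=
    M.mk_L_le.trans_eq (mk_ord_toType _).symm
  have hthin := isThin_range_below hL countable_Iic_toType_ord_aleph_one e.injective
  have hcard : #(Set.range M.below) = #(M.V ⊤) := mk_range_eq _ M.below_injective
  have hlt : ℵ₁ < #(Set.range M.below) := by
    rw [hcard]
    exact aleph_one_le_continuum.trans_lt (two_power_aleph0 ▸ h)
  exact ⟨_, STree.isKurepaTree_ofFamily (aleph0_le_aleph 1) (Ordinal.type_toType _) hthin hlt,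
    hcard.ge.trans (STree.mk_le_branchCard_ofFamily (Ordinal.type_toType _))⟩

theorem exists_card_eq_iff {κ : Cardinal} :
    (∃ M : PsiModel, M.card = κ) ↔
      ℵ₀ ≤ κ ∧ (κ ≤ 2 ^ ℵ₀ ∨ ∃ T : STree, IsKurepaTree ℵ₁ T ∧ κ ≤ T.branchCard ℵ₁) := by
  have h₁ : ℵ₁ ≤ 2 ^ ℵ₀ := aleph_one_le_continuum.trans_eq two_power_aleph0.symm
  constructor
  · rintro ⟨M, rfl⟩
    refine ⟨M.aleph0_le_card, or_iff_not_imp_left.2 fun hM => ?_⟩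
    rw [not_le] at hM
    have hcard : M.card ≤ #(M.V ⊤) := (le_max_iff.1 <| M.card_le
      (le_max_of_le_left (cantor ℵ₀).le) (le_max_of_le_left (M.mk_L_le.trans h₁))
      (le_max_right (2 ^ ℵ₀) _)).resolve_left hM.not_ge
    obtain ⟨T, hT, hMT⟩ := exists_isKurepaTree (hM.trans_le hcard)
    exact ⟨T, hT, hcard.trans hMT⟩
  · rintro ⟨h₀, h | ⟨T, hT, h⟩⟩
    · exact exists_card_eq_of_le_continuum h₀ h
    · rcases le_or_gt κ (2 ^ ℵ₀) with hκ | hκ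
      · exact exists_card_eq_of_le_continuum h₀ hκ
      · exact exists_card_eq_of_le_branchCard hT (h₁.trans hκ.le) h

end PsiModel

theorem stmt17_general (B : Cardinal)
    (hB : B = sSup {lam | ∃ T : STree, IsKurepaTree ℵ₁ T ∧ T.branchCard ℵ₁ = lam})
    (hmax : 2 ^ ℵ₀ < B → ∃ T : STree, IsKurepaTree ℵ₁ T ∧ T.branchCard ℵ₁ = B) :
    {κ : Cardinal | ∃ M : PsiModel, M.card = κ} = Set.Icc ℵ₀ (max (2 ^ ℵ₀) B) := by
  ext κ
  rw [Set.mem_ofPred_eq, PsiModel.exists_card_eq_iff, Set.mem_Icc, le_max_iff]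
  refine and_congr_right fun _ => or_congr_right' fun hκ => ⟨?_, fun hκB => ?_⟩
  · rintro ⟨T, hT, hκT⟩
    exact hB ▸ hκT.trans hT.branchCard_le_sSup
  · obtain ⟨T, hT, rfl⟩ := hmax ((not_le.1 hκ).trans_le hκB)
    exact ⟨T, hT, hκB⟩

/-- If the supremum `B` of branch-counts of `ℵ₁`-Kurepa trees is attained, then the
spectrum of `ψ` equals `[ℵ₀, max (2^ℵ₀) B]`, i.e. `ψ` characterizes `max (2^ℵ₀) B`. -/
theorem stmt17 (B : Cardinal)
    (hB : B = sSup {lam | ∃ T : STree, IsKurepaTree (aleph 1) T ∧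
      T.branchCard (aleph 1) = lam})
    (hmax : ∃ T : STree, IsKurepaTree (aleph 1) T ∧ T.branchCard (aleph 1) = B) :
    {κ : Cardinal | ∃ M : PsiModel, M.card = κ} = Set.Icc ℵ₀ (max (2 ^ ℵ₀) B) :=
  stmt17_general B hB fun _ => hmax
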